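/- arXiv:1704.05641 — 2 statements merged into one kernel-verified Lean document; each statement's English description precedes it below -/
import Mathlib

section
/- If O ⊆ F is locally optimal for the constructed MUFL instance with respect to the single-swap neighbourhood, then the truth assignment T_O is locally optimal for the Max 2-Sat instance (B,w) with respect to the flip neighbourhood: no truth assignment obtained from T_O by changing the truth value of a single variable has strictly larger SAT cost. -/
open Finset
open scoped ENNReal

/-- A literal over `N` variables: a variable index together with a polarity
(`true` = positive literal `x_n`, `false` = negated literal `x̄_n`). -/
abbrev Lit (N : ℕ) := Fin N × Bool

/-- The negation of a literal. -/
def Lit.neg {N : ℕ} (p : Lit N) : Lit N := (p.1, !p.2)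

/-- A 2-SAT clause: two literals over distinct variables. -/
structure Clause (N : ℕ) where
  l1 : Lit N
  l2 : Lit N
  distinct : l1.1 ≠ l2.1

/-- The literal `p` occurs in the clause `cl`. -/
def Clause.occurs {N : ℕ} (p : Lit N) (cl : Clause N) : Prop := p = cl.l1 ∨ p = cl.l2

instance {N : ℕ} (p : Lit N) (cl : Clause N) : Decidable (Clause.occurs p cl) := by
  unfold Clause.occurs; infer_instance

/-- The truth assignment `T` satisfies the clause `cl`. -/
def Clause.satisfied {N : ℕ} (T : Fin N → Bool) (cl : Clause N) : Prop :=
  T cl.l1.1 = cl.l1.2 ∨ T cl.l2.1 = cl.l2.2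

instance {N : ℕ} (T : Fin N → Bool) (cl : Clause N) : Decidable (Clause.satisfied T cl) := by
  unfold Clause.satisfied; infer_instance

/-- The point set of the construction: one point per literal (facility/literal points)
and one point per clause. -/
abbrev Pt (N M : ℕ) := Lit N ⊕ Fin M

/-- The SAT cost `w(B,T)`: total weight of the clauses satisfied by `T`. -/
def satCost {N M : ℕ} (b : Fin M → Clause N) (w : Fin M → ℕ) (T : Fin N → Bool) : ℕ :=
  ∑ m ∈ Finset.univ.filter (fun m => Clause.satisfied T (b m)), w m

/-- The distance function of the constructed MUFL instance. -/
noncomputable def dFL {N M : ℕ} (b : Fin M → Clause N) (w : Fin M → ℕ) (W c : ℝ) :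
    Pt N M → Pt N M → ℝ := fun p q =>
  if p = q then 0
  else
    match p, q with
    | Sum.inl x, Sum.inl y => if x.1 = y.1 then 1 else 2
    | Sum.inl x, Sum.inr m =>
        if Clause.occurs x (b m) then 1 + (w m : ℝ) / W
        else if Clause.occurs (Lit.neg x) (b m) then 1 + c * (w m : ℝ) / W
        else 2
    | Sum.inr m, Sum.inl x =>
        if Clause.occurs x (b m) then 1 + (w m : ℝ) / W
        else if Clause.occurs (Lit.neg x) (b m) then 1 + c * (w m : ℝ) / W
        else 2
    | Sum.inr _, Sum.inr _ => 2

/-- The MUFL cost `φ_FL(C,F,O)` of a set of open facilities `O`: every client connects to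
the nearest open facility (`∞` if no facility is open), plus opening cost `2` per
open facility. -/
noncomputable def phiFL {N M : ℕ} (d : Pt N M → Pt N M → ℝ) (O : Finset (Lit N)) : ℝ≥0∞ :=
  (∑ p : Pt N M, ⨅ o ∈ O, ENNReal.ofReal (d p (Sum.inl o))) + 2 * (O.card : ℝ≥0∞)

/-- A set of open facilities is reasonable if it has size `N` and contains a facility
corresponding to each variable. -/
def ReasonableFL {N : ℕ} (O : Finset (Lit N)) : Prop :=
  O.card = N ∧ ∀ n : Fin N, (n, true) ∈ O ∨ (n, false) ∈ O

/-- The truth assignment `T_O` induced by a set of open facilities: `x_n` is true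
iff the facility `x_n` is open. -/
def assignOf {N : ℕ} (O : Finset (Lit N)) : Fin N → Bool :=
  fun n => decide ((n, true) ∈ O)


/-- Real-valued connection cost of a client. -/
noncomputable def gFL {N M : ℕ} (d : Pt N M → Pt N M → ℝ) (O : Finset (Lit N)) (p : Pt N M) : ℝ :=
  if h : O.Nonempty then O.inf' h (fun o => d p (Sum.inl o)) else 0

noncomputable def costFL {N M : ℕ} (d : Pt N M → Pt N M → ℝ) (O : Finset (Lit N)) : ℝ :=
  (∑ p : Pt N M, gFL d O p) + 2 * (O.card : ℝ)

lemma gFL_le {N M : ℕ} (d : Pt N M → Pt N M → ℝ) (O : Finset (Lit N)) (p : Pt N M)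
    (o : Lit N) (ho : o ∈ O) : gFL d O p ≤ d p (Sum.inl o) := by
  have h : O.Nonempty := ⟨o, ho⟩
  rw [gFL, dif_pos h]
  exact Finset.inf'_le (fun o => d p (Sum.inl o)) ho

lemma gFL_exists {N M : ℕ} (d : Pt N M → Pt N M → ℝ) (O : Finset (Lit N)) (h : O.Nonempty)
    (p : Pt N M) : ∃ o ∈ O, gFL d O p = d p (Sum.inl o) := by
  rw [gFL, dif_pos h]
  exact Finset.exists_mem_eq_inf' h (fun o => d p (Sum.inl o))

lemma phiFL_eq {N M : ℕ} (d : Pt N M → Pt N M → ℝ) (hd : ∀ p q, 0 ≤ d p q)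
    (O : Finset (Lit N)) (h : O.Nonempty) :
    0 ≤ costFL d O ∧ phiFL d O = ENNReal.ofReal (costFL d O) := by
  have hg : ∀ p, 0 ≤ gFL d O p := by
    intro p
    obtain ⟨o, _, e⟩ := gFL_exists d O h p
    rw [e]; exact hd _ _
  have hs : 0 ≤ ∑ p : Pt N M, gFL d O p := Finset.sum_nonneg (fun p _ => hg p)
  refine ⟨by unfold costFL; positivity, ?_⟩
  have hi : ∀ p : Pt N M, (⨅ o ∈ O, ENNReal.ofReal (d p (Sum.inl o))) =
      ENNReal.ofReal (gFL d O p) := by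
    intro p
    apply le_antisymm
    · obtain ⟨o, ho, e⟩ := gFL_exists d O h p
      rw [e]
      exact iInf₂_le o ho
    · exact le_iInf₂ (fun o ho => ENNReal.ofReal_le_ofReal (gFL_le d O p o ho))
  unfold phiFL costFL
  rw [ENNReal.ofReal_add hs (by positivity), ENNReal.ofReal_sum_of_nonneg (fun p _ => hg p),
    ENNReal.ofReal_mul (by norm_num), ENNReal.ofReal_natCast]
  simp only [hi]
  norm_num

lemma phiFL_lt {N M : ℕ} (d : Pt N M → Pt N M → ℝ) (hd : ∀ p q, 0 ≤ d p q)
    (A O : Finset (Lit N)) (hA : A.Nonempty) (h : O.Nonempty) (hlt : costFL d A < costFL d O) :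
    phiFL d A < phiFL d O := by
  obtain ⟨a0, a1⟩ := phiFL_eq d hd A hA
  obtain ⟨b0, b1⟩ := phiFL_eq d hd O h
  rw [a1, b1]
  exact (ENNReal.ofReal_lt_ofReal_iff_of_nonneg a0).2 hlt

/-- The open facilities of a truth assignment. -/
def facOf {N : ℕ} (T : Fin N → Bool) : Finset (Lit N) :=
  Finset.univ.filter (fun y => T y.1 = y.2)

section
variable {N M : ℕ} (b : Fin M → Clause N) (w : Fin M → ℕ) (W c : ℝ)

lemma dFL_self (x : Lit N) : dFL b w W c (Sum.inl x) (Sum.inl x) = 0 := by simp [dFL]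

lemma dFL_lit (x y : Lit N) (h : x ≠ y) :
    dFL b w W c (Sum.inl x) (Sum.inl y) = if x.1 = y.1 then 1 else 2 := by
  simp [dFL, h]

lemma dFL_cl (m : Fin M) (x : Lit N) :
    dFL b w W c (Sum.inr m) (Sum.inl x) = if Clause.occurs x (b m) then 1 + (w m : ℝ) / W
        else if Clause.occurs (Lit.neg x) (b m) then 1 + c * (w m : ℝ) / W
        else 2 := by
  simp [dFL]

lemma dFL_nonneg (hW : 0 < W) (hc : 1 < c) (p q : Pt N M) : 0 ≤ dFL b w W c p q := by
  unfold dFL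
  split_ifs
  · exact le_rfl
  · have h1 : ∀ m, 0 ≤ (w m : ℝ) / W := fun m => by positivity
    have h2 : ∀ m, 0 ≤ c * (w m : ℝ) / W := fun m => by positivity
    rcases p with x | m <;> rcases q with y | k <;> dsimp only <;> (try split_ifs) <;>
      first
      | positivity
      | (have := h1 m; linarith)
      | (have := h2 m; linarith)
      | (have := h1 k; linarith)
      | (have := h2 k; linarith)

lemma occurs_neg (a : Lit N) (cl : Clause N) (h : Clause.occurs a cl) :
    ¬ Clause.occurs (Lit.neg a) cl := by
  have hd := cl.distinct
  unfold Clause.occurs Lit.neg at *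
  rcases h with h | h
  · rintro (h' | h')
    · rw [← h] at h'
      have := congrArg Prod.snd h'
      simp at this
    · rw [← h, ← h'] at hd; simp at hd
  · rintro (h' | h')
    · rw [← h, ← h'] at hd; simp at hd
    · rw [← h] at h'
      have := congrArg Prod.snd h'
      simp at this

lemma neg_neg_lit (a : Lit N) : Lit.neg (Lit.neg a) = a := by simp [Lit.neg]

lemma neg_ne_lit (a : Lit N) : Lit.neg a ≠ a := by
  intro h
  have := congrArg Prod.snd h
  simp [Lit.neg] at this

lemma close_lt (hW : 0 < W) (hc1 : 1 < c) (hc2 : c < 2) (hsum : ∑ m, (w m : ℝ) ≤ W)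
    (O : Finset (Lit N)) (a : Lit N) (ha : a ∈ O) (hna : Lit.neg a ∈ O) :
    costFL (dFL b w W c) (O.erase a) < costFL (dFL b w W c) O := by
  have hne : O.Nonempty := ⟨a, ha⟩
  have hna' : Lit.neg a ∈ O.erase a := Finset.mem_erase.2 ⟨neg_ne_lit a, hna⟩
  have hlit : ∀ y : Lit N, gFL (dFL b w W c) (O.erase a) (Sum.inl y) ≤
      gFL (dFL b w W c) O (Sum.inl y) + if y = a then 1 else 0 := by
    intro y
    obtain ⟨o, ho, e⟩ := gFL_exists (dFL b w W c) O hne (Sum.inl y)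
    rw [e]
    by_cases hoa : o = a
    · subst hoa
      have h1 := gFL_le (dFL b w W c) (O.erase o) (Sum.inl y) _ hna'
      by_cases hy : y = o
      · subst hy
        rw [dFL_lit b w W c _ _ (neg_ne_lit y).symm] at h1
        rw [dFL_self]
        simpa [Lit.neg] using h1
      · rw [dFL_lit b w W c _ _ hy]
        by_cases hy2 : y = Lit.neg o
        · rw [← hy2, dFL_self] at h1
          split_ifs <;> linarith
        · rw [dFL_lit b w W c _ _ hy2] at h1
          have h2 : (Lit.neg o).1 = o.1 := rfl
          rw [h2] at h1
          rw [if_neg hy, add_zero]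
          exact h1
    · have h1 := gFL_le (dFL b w W c) (O.erase a) (Sum.inl y) o (Finset.mem_erase.2 ⟨hoa, ho⟩)
      split_ifs <;> linarith
  have hcl : ∀ m : Fin M, gFL (dFL b w W c) (O.erase a) (Sum.inr m) ≤
      gFL (dFL b w W c) O (Sum.inr m) + (c - 1) / W * (w m : ℝ) := by
    intro m
    have hp : 0 ≤ (c - 1) / W * (w m : ℝ) := by
      have : 0 ≤ c - 1 := by linarith
      positivity
    have hpe : c * (w m : ℝ) / W = (w m : ℝ) / W + (c - 1) / W * (w m : ℝ) := by
      field_simp; ring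
    obtain ⟨o, ho, e⟩ := gFL_exists (dFL b w W c) O hne (Sum.inr m)
    rw [e]
    by_cases hoa : o = a
    · subst hoa
      have h1 := gFL_le (dFL b w W c) (O.erase o) (Sum.inr m) _ hna'
      rw [dFL_cl, neg_neg_lit] at h1
      rw [dFL_cl]
      have := occurs_neg o (b m)
      split_ifs at h1 ⊢ <;> first | linarith | tauto
    · have h1 := gFL_le (dFL b w W c) (O.erase a) (Sum.inr m) o (Finset.mem_erase.2 ⟨hoa, ho⟩)
      linarith
  have s1 := Finset.sum_le_sum (fun y (_ : y ∈ Finset.univ) => hlit y)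
  have s2 := Finset.sum_le_sum (fun y (_ : y ∈ Finset.univ) => hcl y)
  rw [Finset.sum_add_distrib] at s1 s2
  rw [← Finset.mul_sum] at s2
  have h3 : (c - 1) / W * ∑ m, (w m : ℝ) ≤ c - 1 := by
    have h0 : 0 ≤ (c - 1) / W := div_nonneg (by linarith) hW.le
    calc _ ≤ (c - 1) / W * W := mul_le_mul_of_nonneg_left hsum h0
      _ = c - 1 := by field_simp
  have h4 : (∑ y : Lit N, if y = a then (1 : ℝ) else 0) = 1 := by simp
  have h5 : ((O.erase a).card : ℝ) + 1 = O.card := by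
    exact_mod_cast Finset.card_erase_add_one ha
  unfold costFL
  rw [Fintype.sum_sum_type, Fintype.sum_sum_type]
  linarith

lemma open_lt (O : Finset (Lit N)) (hne : O.Nonempty) (a : Lit N) (ha : a ∉ O)
    (hna : Lit.neg a ∉ O) :
    costFL (dFL b w W c) (insert a O) < costFL (dFL b w W c) O := by
  have key : ∀ p, gFL (dFL b w W c) (insert a O) p ≤ gFL (dFL b w W c) O p := by
    intro p
    obtain ⟨o, ho, e⟩ := gFL_exists (dFL b w W c) O hne p
    rw [e]
    exact gFL_le _ _ _ _ (Finset.mem_insert_of_mem ho)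
  have hv : ∀ o ∈ O, a.1 ≠ o.1 := by
    intro o ho h
    have : o = a ∨ o = Lit.neg a := by
      rcases o with ⟨o1, o2⟩
      rcases a with ⟨a1, a2⟩
      simp only at h
      subst h
      cases o2 <;> cases a2 <;> simp [Lit.neg]
    rcases this with h | h <;> subst h <;> contradiction
  have hlit : ∀ y : Lit N, gFL (dFL b w W c) (insert a O) (Sum.inl y) +
      ((if y = a then 2 else 0) + (if y = Lit.neg a then 1 else 0)) ≤
      gFL (dFL b w W c) O (Sum.inl y) := by
    intro y
    obtain ⟨o, ho, e⟩ := gFL_exists (dFL b w W c) O hne (Sum.inl y)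
    have h1 := gFL_le (dFL b w W c) (insert a O) (Sum.inl y) a (Finset.mem_insert_self _ _)
    have hvo := hv o ho
    by_cases hy : y = a
    · subst hy
      rw [dFL_self] at h1
      rw [e, dFL_lit b w W c _ _ (fun h => hvo (by rw [h])), if_neg hvo, if_pos rfl,
        if_neg (neg_ne_lit y).symm]
      linarith
    · by_cases hy2 : y = Lit.neg a
      · subst hy2
        have hvo' : (Lit.neg a).1 ≠ o.1 := hvo
        rw [dFL_lit b w W c _ _ (neg_ne_lit a), if_pos (show (Lit.neg a).1 = a.1 from rfl)] at h1
        rw [e, dFL_lit b w W c _ _ (fun h => hvo' (by rw [h])), if_neg hvo', if_pos rfl, if_neg hy]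
        linarith
      · have := key (Sum.inl y)
        rw [if_neg hy, if_neg hy2]
        linarith
  have s1 := Finset.sum_le_sum (fun y (_ : y ∈ Finset.univ) => hlit y)
  have s2 := Finset.sum_le_sum (fun (m : Fin M) (_ : m ∈ Finset.univ) => key (Sum.inr m))
  rw [Finset.sum_add_distrib, Finset.sum_add_distrib] at s1
  have h4 : (∑ y : Lit N, if y = a then (2 : ℝ) else 0) = 2 := by simp
  have h4' : (∑ y : Lit N, if y = Lit.neg a then (1 : ℝ) else 0) = 1 := by simp
  have h5 : ((insert a O).card : ℝ) = O.card + 1 := by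
    exact_mod_cast Finset.card_insert_of_notMem ha
  unfold costFL
  rw [Fintype.sum_sum_type, Fintype.sum_sum_type]
  linarith

lemma card_facOf (T : Fin N → Bool) : (facOf T).card = N := by
  have : facOf T = Finset.univ.image (fun n => (n, T n)) := by
    ext ⟨n, v⟩
    simp [facOf]
  rw [this, Finset.card_image_of_injective _ (fun x y h => by simpa using congrArg Prod.fst h)]
  simp

lemma cost_facOf (hW : 0 < W) (hc1 : 1 < c) (hle : ∀ m, c * (w m : ℝ) / W ≤ 1)
    (n0 : Fin N) (T : Fin N → Bool) :
    costFL (dFL b w W c) (facOf T) =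
      3 * N + M + c / W * (∑ m, (w m : ℝ)) - (c - 1) / W * (satCost b w T : ℝ) := by
  have mem : ∀ y : Lit N, y ∈ facOf T ↔ T y.1 = y.2 := by intro y; simp [facOf]
  have hne : (facOf T).Nonempty := ⟨(n0, T n0), by simp [mem]⟩
  have hlit : ∀ y : Lit N, gFL (dFL b w W c) (facOf T) (Sum.inl y) =
      if T y.1 = y.2 then 0 else 1 := by
    intro y
    obtain ⟨o, ho, e⟩ := gFL_exists (dFL b w W c) (facOf T) hne (Sum.inl y)
    by_cases hy : T y.1 = y.2
    · rw [if_pos hy]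
      apply le_antisymm
      · have := gFL_le (dFL b w W c) _ (Sum.inl y) y ((mem y).2 hy)
        rwa [dFL_self] at this
      · rw [e]; exact dFL_nonneg b w W c hW hc1 _ _
    · rw [if_neg hy]
      have hyo : ∀ o ∈ facOf T, y ≠ o := by
        rintro o ho rfl
        exact hy ((mem _).1 ho)
      apply le_antisymm
      · have hm : (y.1, T y.1) ∈ facOf T := by simp [mem]
        have := gFL_le (dFL b w W c) _ (Sum.inl y) _ hm
        rw [dFL_lit b w W c _ _ (hyo _ hm)] at this
        simpa using this
      · rw [e, dFL_lit b w W c _ _ (hyo _ ho)]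
        split_ifs <;> norm_num
  have hcl : ∀ m : Fin M, gFL (dFL b w W c) (facOf T) (Sum.inr m) =
      1 + c / W * (w m : ℝ) - (c - 1) / W * (if Clause.satisfied T (b m) then (w m : ℝ) else 0) := by
    intro m
    have hp : 0 ≤ (c - 1) / W * (w m : ℝ) := by
      have : 0 ≤ c - 1 := by linarith
      positivity
    have hpe : c * (w m : ℝ) / W = (w m : ℝ) / W + (c - 1) / W * (w m : ℝ) := by
      field_simp; ring
    have hpe' : c / W * (w m : ℝ) = c * (w m : ℝ) / W := by ring
    have hm1 := hle m
    obtain ⟨o, ho, e⟩ := gFL_exists (dFL b w W c) (facOf T) hne (Sum.inr m)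
    by_cases hs : Clause.satisfied T (b m)
    · rw [if_pos hs]
      have hex : ∃ y ∈ facOf T, Clause.occurs y (b m) := by
        rcases hs with h | h
        · exact ⟨_, (mem _).2 h, Or.inl rfl⟩
        · exact ⟨_, (mem _).2 h, Or.inr rfl⟩
      obtain ⟨y, hy, hyo⟩ := hex
      apply le_antisymm
      · have := gFL_le (dFL b w W c) _ (Sum.inr m) _ hy
        rw [dFL_cl, if_pos hyo] at this
        linarith
      · rw [e, dFL_cl]
        split_ifs <;> linarith
    · rw [if_neg hs]
      have hno : ∀ y ∈ facOf T, ¬ Clause.occurs y (b m) := by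
        rintro y hy (h | h)
        · exact hs (Or.inl (by rw [← h]; exact (mem _).1 hy))
        · exact hs (Or.inr (by rw [← h]; exact (mem _).1 hy))
      apply le_antisymm
      · have hm : Lit.neg (b m).l1 ∈ facOf T := by
          rw [mem]
          have : ¬ T (b m).l1.1 = (b m).l1.2 := fun h => hs (Or.inl h)
          simp only [Lit.neg]
          revert this
          cases T (b m).l1.1 <;> cases (b m).l1.2 <;> simp
        have := gFL_le (dFL b w W c) _ (Sum.inr m) _ hm
        rw [dFL_cl, if_neg (hno _ hm), neg_neg_lit,
          if_pos (show Clause.occurs (b m).l1 (b m) from Or.inl rfl)] at this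
        linarith
      · rw [e, dFL_cl, if_neg (hno _ ho)]
        split_ifs <;> linarith
  unfold costFL
  rw [Fintype.sum_sum_type, card_facOf]
  simp only [hlit, hcl]
  rw [Finset.sum_sub_distrib, Finset.sum_add_distrib, ← Finset.mul_sum, ← Finset.mul_sum]
  have h1 : (∑ y : Lit N, if T y.1 = y.2 then (0 : ℝ) else 1) = N := by
    rw [Fintype.sum_prod_type]
    have : ∀ n : Fin N, (∑ v : Bool, if T n = v then (0 : ℝ) else 1) = 1 := by
      intro n
      cases T n <;> simp
    simp only [this]
    simp
  have h2 : (∑ m : Fin M, if Clause.satisfied T (b m) then (w m : ℝ) else 0) =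
      (satCost b w T : ℝ) := by
    unfold satCost
    rw [Finset.sum_filter]
    push_cast
    rfl
  rw [h1, h2]
  simp
  ring

end

/-- If `O` is locally optimal for the MUFL instance w.r.t. single-swap, then `T_O`
is locally optimal for the Max-2-SAT instance w.r.t. flipping a single variable. -/
theorem assignOf_localOpt_of_localOpt {N M : ℕ} (hM : 2 ≤ M) (b : Fin M → Clause N) (w : Fin M → ℕ)
    (hw : ∀ m, 0 < w m) (c : ℝ) (hc1 : 1 < c) (hc2 : c < 2)
    (W : ℝ) (hW : W = (M : ℝ) * ((Finset.univ.sup w : ℕ) : ℝ))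
    (O : Finset (Lit N))
    (hopen : ∀ a ∉ O, ¬ phiFL (dFL b w W c) (insert a O) < phiFL (dFL b w W c) O)
    (hclose : ∀ a ∈ O, ¬ phiFL (dFL b w W c) (O.erase a) < phiFL (dFL b w W c) O)
    (hswap : ∀ a ∉ O, ∀ r ∈ O,
      ¬ phiFL (dFL b w W c) (insert a (O.erase r)) < phiFL (dFL b w W c) O) :
    ∀ n : Fin N,
      satCost b w (Function.update (assignOf O) n (!(assignOf O n))) ≤
        satCost b w (assignOf O) := by
  intro n
  have hm0 : Fin M := ⟨0, by omega⟩
  have hMr : (2 : ℝ) ≤ M := by exact_mod_cast hM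
  have hsup : ∀ m, w m ≤ Finset.univ.sup w := fun m => Finset.le_sup (Finset.mem_univ m)
  have hsup1 : (1 : ℝ) ≤ ((Finset.univ.sup w : ℕ) : ℝ) := by
    exact_mod_cast (hw hm0).trans_le (hsup hm0)
  have hWpos : 0 < W := by rw [hW]; nlinarith
  have hsum : ∑ m, (w m : ℝ) ≤ W := by
    have := Finset.sum_le_card_nsmul Finset.univ (fun m => (w m : ℝ))
      ((Finset.univ.sup w : ℕ) : ℝ) (fun m _ => by exact_mod_cast hsup m)
    rw [hW]
    simpa using this
  have hle : ∀ m, c * (w m : ℝ) / W ≤ 1 := by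
    intro m
    rw [div_le_one hWpos, hW]
    have h1 : (w m : ℝ) ≤ ((Finset.univ.sup w : ℕ) : ℝ) := by exact_mod_cast hsup m
    have h2 : (0 : ℝ) ≤ w m := by positivity
    nlinarith
  have hd := dFL_nonneg b w W c hWpos hc1
  have hne : O.Nonempty := by
    by_contra hO
    rw [Finset.not_nonempty_iff_eq_empty] at hO
    subst hO
    apply hopen (n, true) (by simp)
    rw [(phiFL_eq _ hd (insert (n, true) ∅) (by simp)).2]
    have : phiFL (dFL b w W c) ∅ = ⊤ := by
      unfold phiFL
      simp only [Finset.notMem_empty, iInf_false, iInf_top]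
      rw [ENNReal.add_eq_top]
      left
      rw [ENNReal.sum_eq_top]
      exact ⟨Sum.inr hm0, Finset.mem_univ _, rfl⟩
    rw [this]
    exact ENNReal.ofReal_lt_top
  have hboth : ∀ a ∈ O, Lit.neg a ∉ O := by
    intro a ha hna
    apply hclose a ha
    exact phiFL_lt _ hd _ _ ⟨_, Finset.mem_erase.2 ⟨neg_ne_lit a, hna⟩⟩ hne
      (close_lt b w W c hWpos hc1 hc2 hsum O a ha hna)
  have hnone : ∀ a ∉ O, Lit.neg a ∈ O := by
    intro a ha
    by_contra hna
    apply hopen a ha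
    exact phiFL_lt _ hd _ _ (by simp) hne (open_lt b w W c O hne a ha hna)
  have hO : O = facOf (assignOf O) := by
    ext ⟨k, v⟩
    have h1 := hboth (k, true)
    have h2 := hnone (k, true)
    simp only [Lit.neg, Bool.not_true] at h1 h2
    rw [facOf, Finset.mem_filter]
    by_cases hk : (k, true) ∈ O
    · have := h1 hk
      cases v <;> simp [assignOf, hk, this]
    · have := h2 hk
      cases v <;> simp [assignOf, hk, this]
  set T := assignOf O with hT
  have hmem : ∀ y : Lit N, y ∈ O ↔ T y.1 = y.2 := by
    intro y
    rw [hO]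
    simp [facOf]
  have hA : insert (n, !(T n)) (O.erase (n, T n)) = facOf (Function.update T n (!(T n))) := by
    ext ⟨k, v⟩
    simp only [Finset.mem_insert, Finset.mem_erase, hmem, facOf, Finset.mem_filter,
      Finset.mem_univ, true_and, Prod.mk.injEq, ne_eq]
    by_cases hk : k = n
    · subst hk
      rw [Function.update_self]
      cases T k <;> cases v <;> simp
    · rw [Function.update_of_ne hk]
      simp [hk]
  have hs := hswap (n, !(T n)) (by rw [hmem]; simp) (n, T n) (by rw [hmem])
  rw [hA] at hs
  have hs2 : ¬ costFL (dFL b w W c) (facOf (Function.update T n (!(T n)))) <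
      costFL (dFL b w W c) O := fun h =>
    hs (phiFL_lt _ hd _ _ (by rw [← hA]; simp) hne h)
  rw [hO, cost_facOf b w W c hWpos hc1 hle n, cost_facOf b w W c hWpos hc1 hle n] at hs2
  have hpos : 0 < (c - 1) / W := div_pos (by linarith) hWpos
  by_contra hlt
  push Not at hlt
  apply hs2
  have hlt' : (satCost b w T : ℝ) < (satCost b w (Function.update T n (!(T n))) : ℝ) := by
    exact_mod_cast hlt
  have := mul_lt_mul_of_pos_left hlt' hpos
  linarith
end

section
/- If O ⊆ C is a reasonable solution of the constructed DKM instance, then φ_KM(C,O) = N + M·(1 + (3/2)ε) + (ε/(2W))·Σ_{b_m∈B} w(b_m) + (ε/(2W))·(c−1)·Σ_{b_m∈B_f(T_O)} w(b_m). -/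
open Finset
open scoped ENNReal

/-- The distance function of the constructed DKM instance. -/
noncomputable def dKM {N M : ℕ} (b : Fin M → Clause N) (w : Fin M → ℕ) (W c ε : ℝ) :
    Pt N M → Pt N M → ℝ := fun p q =>
  if p = q then 0
  else
    match p, q with
    | Sum.inl x, Sum.inl y => if x.1 = y.1 then 1 else 1 + 2 * ε
    | Sum.inl x, Sum.inr m =>
        if Clause.occurs x (b m) then 1 + ε * (3 / 2 + (w m : ℝ) / (2 * W))
        else if Clause.occurs (Lit.neg x) (b m) then 1 + ε * (3 / 2 + c * (w m : ℝ) / (2 * W))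
        else 1 + 2 * ε
    | Sum.inr m, Sum.inl x =>
        if Clause.occurs x (b m) then 1 + ε * (3 / 2 + (w m : ℝ) / (2 * W))
        else if Clause.occurs (Lit.neg x) (b m) then 1 + ε * (3 / 2 + c * (w m : ℝ) / (2 * W))
        else 1 + 2 * ε
    | Sum.inr _, Sum.inr _ => 1 + 2 * ε

/-- The K-means cost `φ_KM(C,O)` of a set of open locations `O ⊆ C`: every point connects
to the nearest open location (`∞` if `O = ∅`). -/
noncomputable def phiKM {N M : ℕ} (d : Pt N M → Pt N M → ℝ) (O : Finset (Pt N M)) : ℝ≥0∞ :=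
  ∑ p : Pt N M, ⨅ o ∈ O, ENNReal.ofReal (d p o)

/-- A set `O ⊆ C` is reasonable if it consists of literal points only, has size `N`,
and contains a point corresponding to each variable. -/
def ReasonableKM {N M : ℕ} (O : Finset (Pt N M)) : Prop :=
  (∀ p ∈ O, ∃ l : Lit N, p = Sum.inl l) ∧ O.card = N ∧
    ∀ n : Fin N, Sum.inl (n, true) ∈ O ∨ Sum.inl (n, false) ∈ O

/-- The truth assignment `T_O` induced by a set `O ⊆ C`: `x_n` is true iff the point
`x_n` is in `O`. -/
def assignOfKM {N M : ℕ} (O : Finset (Pt N M)) : Fin N → Bool :=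
  fun n => decide (Sum.inl (n, true) ∈ O)

theorem reasonable_mem_iff {N M : ℕ} (O : Finset (Pt N M)) (hO : ReasonableKM O)
    (p : Pt N M) : p ∈ O ↔ ∃ n, p = Sum.inl (n, assignOfKM O n) := by
  obtain ⟨h1, h2, h3⟩ := hO
  have hsub : (Finset.univ.image
      (fun n : Fin N => (Sum.inl (n, assignOfKM O n) : Pt N M))) ⊆ O := by
    intro q hq
    simp only [Finset.mem_image, Finset.mem_univ, true_and] at hq
    obtain ⟨n, rfl⟩ := hq
    by_cases h : (Sum.inl (n, true) : Pt N M) ∈ O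
    · simpa [assignOfKM, h] using h
    · have := (h3 n).resolve_left h
      simpa [assignOfKM, h] using this
  have hcard : (Finset.univ.image
      (fun n : Fin N => (Sum.inl (n, assignOfKM O n) : Pt N M))).card = N := by
    rw [Finset.card_image_of_injective]
    · simp
    · intro a b hab
      simp only [Sum.inl.injEq, Prod.mk.injEq] at hab
      exact hab.1
  have heq := Finset.eq_of_subset_of_card_le hsub (by rw [hcard, h2])
  constructor
  · intro h
    rw [← heq] at h
    simp only [Finset.mem_image, Finset.mem_univ, true_and] at h
    obtain ⟨n, hn⟩ := h
    exact ⟨n, hn.symm⟩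
  · rintro ⟨n, rfl⟩
    exact hsub (Finset.mem_image_of_mem _ (Finset.mem_univ n))

theorem iInf_eq_of_min {α : Type*} (O : Finset α) (f : α → ℝ) (v : ℝ)
    (h1 : ∃ o ∈ O, f o = v) (h2 : ∀ o ∈ O, v ≤ f o) :
    (⨅ o ∈ O, ENNReal.ofReal (f o)) = ENNReal.ofReal v := by
  apply le_antisymm
  · obtain ⟨o, ho, rfl⟩ := h1
    exact iInf₂_le o ho
  · exact le_iInf₂ fun o ho => ENNReal.ofReal_le_ofReal (h2 o ho)

/-- The DKM cost of a reasonable solution. -/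
theorem phiKM_of_reasonable {N M : ℕ} (hM : 2 ≤ M) (b : Fin M → Clause N) (w : Fin M → ℕ)
    (hw : ∀ m, 0 < w m) (c : ℝ) (hc1 : 1 < c) (hc2 : c < 2)
    (W : ℝ) (hW : W = (M : ℝ) * ((Finset.univ.sup w : ℕ) : ℝ))
    (ε : ℝ) (hε : ε = 1 / (4 * (N : ℝ) + 2 * (M : ℝ)))
    (O : Finset (Pt N M)) (hO : ReasonableKM O) :
    phiKM (dKM b w W c ε) O = ENNReal.ofReal (
      (N : ℝ) + (M : ℝ) * (1 + ε * (3 / 2)) + (ε / (2 * W)) * (∑ m, (w m : ℝ)) +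
      (ε / (2 * W)) * (c - 1) * (∑ m ∈ Finset.univ.filter
        (fun m => ¬ Clause.satisfied (assignOfKM O) (b m)), (w m : ℝ))) := by
  have hmem := reasonable_mem_iff O hO
  have hM' : (2 : ℝ) ≤ M := by exact_mod_cast hM
  have hεpos : 0 < ε := by
    rw [hε]; positivity
  have hwW : ∀ m, 0 < (w m : ℝ) ∧ 2 * (w m : ℝ) ≤ W := by
    intro m
    have h0 : (0 : ℝ) < w m := by exact_mod_cast hw m
    have h1 : (w m : ℝ) ≤ ((Finset.univ.sup w : ℕ) : ℝ) := by
      exact_mod_cast Finset.le_sup (f := w) (Finset.mem_univ m)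
    refine ⟨h0, ?_⟩
    rw [hW]; nlinarith
  have hu : ∀ m, 0 < (w m : ℝ) / (2 * W) ∧ (w m : ℝ) / (2 * W) ≤ 1 / 4 := by
    intro m
    obtain ⟨h0, h1⟩ := hwW m
    have hWp : 0 < W := by linarith
    refine ⟨by positivity, ?_⟩
    rw [div_le_iff₀ (by positivity)]; linarith
  set T := assignOfKM O with hT
  let g : Pt N M → ℝ := fun p => match p with
    | Sum.inl x => if x.2 = T x.1 then 0 else 1
    | Sum.inr m => 1 + ε * (3 / 2 + (if Clause.satisfied T (b m) then 1 else c) *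
        ((w m : ℝ) / (2 * W)))
  have hg : ∀ p, 0 ≤ g p := by
    rintro (x | m)
    · simp only [g]; split_ifs <;> norm_num
    · have := (hu m).1
      simp only [g]; split_ifs <;> positivity
  have key : ∀ p, (⨅ o ∈ O, ENNReal.ofReal (dKM b w W c ε p o)) = ENNReal.ofReal (g p) := by
    intro p
    apply iInf_eq_of_min
    · rcases p with ⟨n, v⟩ | m
      · refine ⟨Sum.inl (n, T n), (hmem _).2 ⟨n, rfl⟩, ?_⟩
        by_cases h : v = T n <;> simp [dKM, g, h]
      · by_cases hs : Clause.satisfied T (b m)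
        · have hs' := hs
          rcases hs' with h | h
          · refine ⟨Sum.inl ((b m).l1.1, T (b m).l1.1), (hmem _).2 ⟨_, rfl⟩, ?_⟩
            simp [dKM, g, hs, h, Clause.occurs]
          · refine ⟨Sum.inl ((b m).l2.1, T (b m).l2.1), (hmem _).2 ⟨_, rfl⟩, ?_⟩
            simp [dKM, g, hs, h, Clause.occurs]
        · have hs' := hs
          simp only [Clause.satisfied, not_or] at hs'
          refine ⟨Sum.inl ((b m).l1.1, T (b m).l1.1), (hmem _).2 ⟨_, rfl⟩, ?_⟩
          have hd := (b m).distinct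
          have e1 : ¬ Clause.occurs ((b m).l1.1, T (b m).l1.1) (b m) := by
            rintro (h | h)
            · exact hs'.1 (congrArg Prod.snd h)
            · have h' := congrArg Prod.fst h
              exact hd h'
          have e2 : Clause.occurs (Lit.neg ((b m).l1.1, T (b m).l1.1)) (b m) := by
            left
            refine Prod.ext rfl ?_
            have := hs'.1
            simp only [Lit.neg]
            revert this
            cases T (b m).l1.1 <;> cases (b m).l1.2 <;> simp
          simp only [dKM, g, hs, e1, e2, if_true, if_false, reduceCtorEq]
          ring
    · intro o ho
      obtain ⟨n, rfl⟩ := (hmem o).1 ho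
      rcases p with ⟨k, v⟩ | m
      · simp only [dKM, g, Sum.inl.injEq, Prod.mk.injEq]
        by_cases h1 : v = T k
        · rw [if_pos h1]
          split_ifs <;> linarith
        · have h2 : ¬ (k = n ∧ v = T n) := by
            rintro ⟨rfl, h⟩
            exact h1 h
          rw [if_neg h1, if_neg h2]
          split_ifs <;> linarith
      · have ⟨u0, u1⟩ := hu m
        have occ : Clause.occurs (n, T n) (b m) → Clause.satisfied T (b m) := by
          rintro (h | h)
          · left; rw [← h]
          · right; rw [← h]
        simp only [dKM, g, reduceCtorEq, if_false]
        rw [mul_div_assoc]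
        have hcu : c * ((w m : ℝ) / (2 * W)) ≤ 1 / 2 := by nlinarith
        have hcu' : 0 ≤ ε * (c * ((w m : ℝ) / (2 * W)) - (w m : ℝ) / (2 * W)) := by
          apply mul_nonneg hεpos.le
          nlinarith
        split_ifs with h1 h2 h3 h4 h5 <;>
          first | exact absurd (occ ‹_›) ‹_› | nlinarith
  unfold phiKM
  rw [Finset.sum_congr rfl fun p _ => key p, ← ENNReal.ofReal_sum_of_nonneg fun p _ => hg p]
  congr 1
  rw [Fintype.sum_sum_type, Fintype.sum_prod_type]
  have hlit : ∑ n : Fin N, ∑ v : Bool, g (Sum.inl (n, v)) = (N : ℝ) := by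
    have : ∀ n : Fin N, ∑ v : Bool, g (Sum.inl (n, v)) = 1 := by
      intro n
      rw [Fintype.sum_bool]
      simp only [g]
      cases T n <;> simp
    rw [Finset.sum_congr rfl fun n _ => this n]
    simp
  have hcl : ∑ m : Fin M, g (Sum.inr m) = ∑ m : Fin M, ((1 + ε * (3 / 2)) +
      (ε / (2 * W)) * (w m : ℝ) + (ε / (2 * W)) * (c - 1) *
        (if ¬ Clause.satisfied T (b m) then (w m : ℝ) else 0)) := by
    refine Finset.sum_congr rfl fun m _ => ?_
    simp only [g]
    by_cases h : Clause.satisfied T (b m) <;> simp only [h, if_true, if_false, not_true, not_false_eq_true] <;> ring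
  rw [hlit, hcl, Finset.sum_add_distrib, Finset.sum_add_distrib, ← Finset.mul_sum,
    ← Finset.mul_sum, Finset.sum_filter]
  simp only [Finset.sum_const, Finset.card_univ, Fintype.card_fin, nsmul_eq_mul]
  ring
end
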